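/- arXiv:1312.1744 — 2 statements merged into one kernel-verified Lean document; each statement's English description precedes it below -/
import Mathlib

section
/- Let p ≥ q > 0 and let a < b be real numbers. For every measurable function f : [a,b] → (0,∞), ∫_a^b ((1/(x-a)) ∫_a^x f(y) dy)^{-p} dx ≤ ((p+1)/p)^q · ∫_a^b ((1/(x-a)) ∫_a^x f(y) dy)^{-p+q} · f(x)^{-q} dx (both sides possibly infinite). -/
open MeasureTheory Set

/-!
Let `F x = ∫_a^x f` and let `A x = F x / (x - a)` be the average. Bernoulli's inequality
`1 + q ≤ s ^ (-q) + q s` at `s = p / (p + 1) * (f / A)`, multiplied by `A ^ (-p)`, reads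
`(1 + q) A ^ (-p) ≤ ((p + 1) / p) ^ q A ^ (-p + q) f ^ (-q) + q p / (p + 1) * f A ^ (-p - 1)`,
and the last term is absorbed on the left thanks to
`∫ f A ^ (-p - 1) ≤ (p + 1) / p * ∫ A ^ (-p)`. The latter follows by writing
`(x - a) ^ (p + 1)` as an integral and exchanging the integrals, since
`∫_t^b f F ^ (-p - 1) ≤ F t ^ (-p) / p`. Absorbing requires `∫ A ^ (-p) < ∞`, which holds for
`f + δ` with `δ > 0`; then `δ → 0`, where `q ≤ p` makes the right-hand side decreasing in `δ`.
-/

open Filter Topology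
open scoped ENNReal

section Powers

lemma ennreal_rpow_le_rpow_of_nonpos {x y : ℝ≥0∞} {r : ℝ} (hr : r ≤ 0) (hxy : x ≤ y) :
    y ^ r ≤ x ^ r := by
  rw [← neg_neg r, ENNReal.rpow_neg y, ENNReal.rpow_neg x]
  exact ENNReal.inv_le_inv.2 (ENNReal.rpow_le_rpow hxy (neg_nonneg.2 hr))

lemma one_add_le_rpow_neg_add_mul {s q : ℝ} (hs : 0 < s) (hq : 0 ≤ q) :
    1 + q ≤ s ^ (-q) + q * s := by
  have hlog : q * (1 - s) ≤ Real.log s * -q := by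
    have := mul_le_mul_of_nonneg_left (Real.log_le_sub_one_of_pos hs) hq
    linarith
  have hexp : Real.log s * -q + 1 ≤ s ^ (-q) := by
    rw [Real.rpow_def_of_pos hs]
    exact Real.add_one_le_exp _
  linarith

lemma one_add_le_ennreal_rpow_neg_add_mul {q : ℝ} (hq : 0 < q) (s : ℝ≥0∞) :
    1 + ENNReal.ofReal q ≤ s ^ (-q) + ENNReal.ofReal q * s := by
  rcases eq_or_ne s ⊤ with rfl | hs_top
  · simp [ENNReal.mul_top, hq]
  rcases eq_or_ne s 0 with rfl | hs_zero
  · simp [ENNReal.zero_rpow_of_neg, hq]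
  have hs : 0 < s.toReal := ENNReal.toReal_pos hs_zero hs_top
  rw [← ENNReal.ofReal_toReal hs_top, ENNReal.ofReal_rpow_of_pos hs,
    ← ENNReal.ofReal_mul hq.le, ← ENNReal.ofReal_add (by positivity) (by positivity),
    ← ENNReal.ofReal_one, ← ENNReal.ofReal_add zero_le_one hq.le]
  exact ENNReal.ofReal_le_ofReal (one_add_le_rpow_neg_add_mul hs hq.le)

lemma one_add_mul_rpow_neg_le {p q c : ℝ} (hp : 0 < p) (hq : 0 < q) (hc : 0 < c)
    {A y : ℝ≥0∞} (hA : A ≠ 0) :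
    (1 + ENNReal.ofReal q) * A ^ (-p) ≤
      ENNReal.ofReal (c ^ (-q)) * (A ^ (-p + q) * y ^ (-q)) +
        ENNReal.ofReal q * (ENNReal.ofReal c * (y * A ^ (-p - 1))) := by
  rcases eq_or_ne A ⊤ with rfl | hA_top
  · simp [hp]
  rcases eq_or_ne y 0 with rfl | hy
  · have hApq : A ^ (-p + q) ≠ 0 := by simp [ENNReal.rpow_eq_zero_iff, hA, hA_top]
    have hcq : ENNReal.ofReal (c ^ (-q)) ≠ 0 := by simpa using Real.rpow_pos_of_pos hc _
    simp [ENNReal.zero_rpow_of_neg, hq, ENNReal.mul_top, hApq, hcq]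
  have hc_zero : ENNReal.ofReal c ≠ 0 := by simpa using hc
  have hAinv : A⁻¹ ≠ 0 := ENNReal.inv_ne_zero.2 hA_top
  have hrpow_neg : (ENNReal.ofReal c * (y * A⁻¹)) ^ (-q) =
      ENNReal.ofReal (c ^ (-q)) * (A ^ q * y ^ (-q)) := by
    rw [ENNReal.mul_rpow_of_ne_zero hc_zero (mul_ne_zero hy hAinv),
      ENNReal.mul_rpow_of_ne_zero hy hAinv, ENNReal.ofReal_rpow_of_pos hc, ENNReal.inv_rpow,
      ← ENNReal.rpow_neg, neg_neg, mul_comm (y ^ (-q))]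
  calc (1 + ENNReal.ofReal q) * A ^ (-p)
      ≤ ((ENNReal.ofReal c * (y * A⁻¹)) ^ (-q) +
          ENNReal.ofReal q * (ENNReal.ofReal c * (y * A⁻¹))) * A ^ (-p) := by
        gcongr ?_ * _
        exact one_add_le_ennreal_rpow_neg_add_mul hq _
    _ = ENNReal.ofReal (c ^ (-q)) * (A ^ (-p + q) * y ^ (-q)) +
          ENNReal.ofReal q * (ENNReal.ofReal c * (y * A ^ (-p - 1))) := by
        rw [hrpow_neg, ENNReal.rpow_add _ _ hA hA_top, sub_eq_add_neg,
          ENNReal.rpow_add _ _ hA hA_top, ENNReal.rpow_neg_one]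
        ring

lemma lintegral_Ioc_sub_rpow {a x p : ℝ} (hp : -1 < p) (hax : a ≤ x) :
    ∫⁻ t in Ioc a x, ENNReal.ofReal (p + 1) * ENNReal.ofReal (t - a) ^ p =
      ENNReal.ofReal (x - a) ^ (p + 1) := by
  have hp1 : 0 < p + 1 := by linarith
  have hint : ∫ t in Ioc a x, (p + 1) * (t - a) ^ p = (x - a) ^ (p + 1) := by
    rw [← intervalIntegral.integral_of_le hax,
      intervalIntegral.integral_const_mul,
      intervalIntegral.integral_comp_sub_right (fun t ↦ t ^ p) a, sub_self,
      integral_rpow (Or.inl hp), Real.zero_rpow hp1.ne', sub_zero, mul_div_cancel₀ _ hp1.ne']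
  have hintegrable : IntegrableOn (fun t ↦ (p + 1) * (t - a) ^ p) (Ioc a x) := by
    have hrpow : IntervalIntegrable (fun t : ℝ ↦ t ^ p) volume (a - a) (x - a) :=
      intervalIntegral.intervalIntegrable_rpow' hp
    have hsub := (hrpow.comp_sub_right a).const_mul (p + 1)
    simp only [sub_add_cancel] at hsub
    exact (intervalIntegrable_iff_integrableOn_Ioc_of_le hax).1 hsub
  have hnonneg : ∀ t ∈ Ioc a x, 0 ≤ (p + 1) * (t - a) ^ p := fun t ht ↦
    mul_nonneg hp1.le (Real.rpow_nonneg (sub_nonneg.2 ht.1.le) p)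
  rw [ENNReal.ofReal_rpow_of_nonneg (sub_nonneg.2 hax) hp1.le, ← hint,
    ofReal_integral_eq_lintegral_ofReal hintegrable
      (ae_restrict_of_forall_mem measurableSet_Ioc hnonneg)]
  refine setLIntegral_congr_fun measurableSet_Ioc fun t ht ↦ ?_
  simp only [ENNReal.ofReal_rpow_of_pos (sub_pos.2 ht.1), ENNReal.ofReal_mul hp1.le]

lemma intervalIntegrable_rpow_sub_one_sub_mul_rpow {u p : ℝ} (hp : 0 < p) (c d : ℝ) :
    IntervalIntegrable (fun s : ℝ ↦ s ^ (p - 1) - u * s ^ p) volume c d :=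
  (intervalIntegral.intervalIntegrable_rpow' (by linarith)).sub
    ((intervalIntegral.intervalIntegrable_rpow' (by linarith)).const_mul u)

lemma integral_rpow_sub_one_sub_mul_rpow {u p : ℝ} (hp : 0 < p) (hu : 0 < u) :
    ∫ s in 0..u⁻¹, (s ^ (p - 1) - u * s ^ p) = u ^ (-p) / (p * (p + 1)) := by
  rw [intervalIntegral.integral_sub (intervalIntegral.intervalIntegrable_rpow' (by linarith))
      ((intervalIntegral.intervalIntegrable_rpow' (by linarith)).const_mul u),
    intervalIntegral.integral_const_mul, integral_rpow (Or.inl (by linarith)),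
    integral_rpow (Or.inl (by linarith)), sub_add_cancel, Real.zero_rpow hp.ne',
    Real.zero_rpow (by linarith), Real.rpow_add_one (inv_pos.2 hu).ne', Real.inv_rpow hu.le,
    Real.rpow_neg hu.le]
  field_simp
  ring

lemma lintegral_Ioi_inv_sub_mul_rpow {u p : ℝ} (hp : 0 < p) (hu : 0 < u) :
    ∫⁻ s in Ioi 0, ((ENNReal.ofReal s)⁻¹ - ENNReal.ofReal u) * ENNReal.ofReal (s ^ p) =
      ENNReal.ofReal (u ^ (-p) / (p * (p + 1))) := by
  have hu_inv : 0 < u⁻¹ := inv_pos.2 hu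
  have hfactor : ∀ s : ℝ, 0 < s → (s⁻¹ - u) * s ^ p = s ^ (p - 1) - u * s ^ p := fun s hs ↦ by
    rw [Real.rpow_sub_one hs.ne']
    ring
  have hnonneg : ∀ s ∈ Ioc 0 u⁻¹, 0 ≤ s ^ (p - 1) - u * s ^ p := fun s hs ↦ by
    rw [← hfactor s hs.1]
    exact mul_nonneg (sub_nonneg.2 ((le_inv_comm₀ hs.1 hu).1 hs.2)) (Real.rpow_nonneg hs.1.le p)
  have htail : ∫⁻ s in Ioi u⁻¹,
      ((ENNReal.ofReal s)⁻¹ - ENNReal.ofReal u) * ENNReal.ofReal (s ^ p) = 0 := by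
    refine (setLIntegral_congr_fun measurableSet_Ioi fun s hs ↦ ?_).trans lintegral_zero
    have hle : (ENNReal.ofReal s)⁻¹ ≤ ENNReal.ofReal u := by
      rw [ENNReal.inv_le_iff_inv_le, ← ENNReal.ofReal_inv_of_pos hu]
      exact ENNReal.ofReal_le_ofReal (le_of_lt hs)
    simp only [tsub_eq_zero_of_le hle, zero_mul]
  rw [← Ioc_union_Ioi_eq_Ioi hu_inv.le,
    lintegral_union measurableSet_Ioi (Ioc_disjoint_Ioi le_rfl), htail, add_zero,
    ← integral_rpow_sub_one_sub_mul_rpow hp hu, intervalIntegral.integral_of_le hu_inv.le,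
    ofReal_integral_eq_lintegral_ofReal
      (intervalIntegrable_rpow_sub_one_sub_mul_rpow hp _ _).1
      (ae_restrict_of_forall_mem measurableSet_Ioc hnonneg)]
  refine setLIntegral_congr_fun measurableSet_Ioc fun s hs ↦ ?_
  simp only [← hfactor s hs.1, ENNReal.ofReal_mul' (Real.rpow_nonneg hs.1.le p),
    ENNReal.ofReal_sub _ hu.le, ENNReal.ofReal_inv_of_pos hs.1]

end Powers

section LinearOrder

variable {α : Type*} [LinearOrder α] [TopologicalSpace α] [OrderTopology α]
  [MeasurableSpace α] [BorelSpace α] {μ κ : Measure α}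

lemma measurable_measure_Iic : Measurable fun x ↦ μ (Iic x) :=
  Monotone.measurable fun _ _ h ↦ measure_mono (Iic_subset_Iic.2 h)

lemma measurable_measure_Iio : Measurable fun x ↦ μ (Iio x) :=
  Monotone.measurable fun _ _ h ↦ measure_mono (Iio_subset_Iio h)

variable [SecondCountableTopology α]

lemma measure_Ioi_inter_measure_Iic_le_le_sub (t : α) {c : ℝ≥0∞} (hc : c ≠ ⊤) :
    μ (Ioi t ∩ {x | μ (Iic x) ≤ c}) ≤ c - μ (Iic t) := by
  set S := Ioi t ∩ {x | μ (Iic x) ≤ c}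
  have hS_ordConnected : S.OrdConnected :=
    ordConnected_iff.2 fun x hx y hy _ z hz ↦
      ⟨hx.1.trans_le hz.1, (measure_mono (Iic_subset_Iic.2 hz.2)).trans hy.2⟩
  have hIoc : ∀ x ∈ S, μ (Ioc t x) ≤ c - μ (Iic t) := by
    intro x hx
    have ht : μ (Iic t) ≠ ⊤ :=
      ne_top_of_le_ne_top hc ((measure_mono (Iic_subset_Iic.2 hx.1.le)).trans hx.2)
    refine ENNReal.le_sub_of_add_le_left ht ?_
    rw [← measure_union (Iic_disjoint_Ioc le_rfl) measurableSet_Ioc, Iic_union_Ioc_eq_Iic hx.1.le]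
    exact hx.2
  rcases S.eq_empty_or_nonempty with hempty | hne
  · simp [hempty]
  have := hne.to_subtype
  obtain ⟨v, hv_mono, hv_tendsto⟩ := exists_seq_monotone_tendsto_atTop_atTop S
  have hcover : S ⊆ ⋃ n, Ioc t (v n : α) := fun x hx ↦
    let ⟨n, hn⟩ := (hv_tendsto.eventually_ge_atTop ⟨x, hx⟩).exists
    mem_iUnion.2 ⟨n, hx.1, hn⟩
  have hIoc_mono : Monotone fun n ↦ Ioc t (v n : α) := fun m n hmn ↦
    Ioc_subset_Ioc_right (hv_mono hmn)
  calc μ S ≤ μ (⋃ n, Ioc t (v n : α)) := measure_mono hcover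
    _ = ⨆ n, μ (Ioc t (v n : α)) := hIoc_mono.measure_iUnion
    _ ≤ c - μ (Iic t) := iSup_le fun n ↦ hIoc _ (v n).2

lemma measure_restrict_Ioi_le_toReal_inv_measure_Iic_le_sub (t : α) {s : ℝ} (hs : 0 < s) :
    μ.restrict (Ioi t) {x | s ≤ (μ (Iic x))⁻¹.toReal} ≤
      (ENNReal.ofReal s)⁻¹ - μ (Iic t) := by
  have hsubset : {x | s ≤ (μ (Iic x))⁻¹.toReal} ∩ Ioi t ⊆
      Ioi t ∩ {x | μ (Iic x) ≤ (ENNReal.ofReal s)⁻¹} := fun x ⟨hsx, htx⟩ ↦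
    ⟨htx, ENNReal.le_inv_iff_le_inv.1 (ENNReal.ofReal_le_of_le_toReal hsx)⟩
  rw [Measure.restrict_apply' measurableSet_Ioi]
  exact (measure_mono hsubset).trans
    (measure_Ioi_inter_measure_Iic_le_le_sub t (by simpa using hs))

lemma setLIntegral_Ioi_measure_Iic_rpow_le {p : ℝ} (hp : 0 < p) (t : α) :
    ∫⁻ x in Ioi t, μ (Iic x) ^ (-p - 1) ∂μ ≤ ENNReal.ofReal p⁻¹ * μ (Iic t) ^ (-p) := by
  have hmono : ∀ x ∈ Ioi t, μ (Iic t) ≤ μ (Iic x) := fun x hx ↦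
    measure_mono (Iic_subset_Iic.2 (le_of_lt hx))
  rcases eq_or_ne (μ (Iic t)) 0 with hzero | hzero
  · simp [hzero, ENNReal.zero_rpow_of_neg, hp, ENNReal.mul_top]
  rcases eq_or_ne (μ (Iic t)) ⊤ with htop | htop
  · have hvanish : ∀ x ∈ Ioi t, μ (Iic x) ^ (-p - 1) = 0 := fun x hx ↦ by
      rw [eq_top_mono (hmono x hx) htop, ENNReal.top_rpow_of_neg (by linarith)]
    rw [setLIntegral_congr_fun measurableSet_Ioi hvanish, lintegral_zero]
    exact zero_le
  set u := (μ (Iic t)).toReal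
  have hu : 0 < u := ENNReal.toReal_pos hzero htop
  have hu_ofReal : ENNReal.ofReal u = μ (Iic t) := ENNReal.ofReal_toReal htop
  have hinv_ne_top : ∀ x ∈ Ioi t, (μ (Iic x))⁻¹ ≠ ⊤ := fun x hx ↦
    ENNReal.inv_ne_top.2 ((pos_iff_ne_zero.2 hzero).trans_le (hmono x hx)).ne'
  calc ∫⁻ x in Ioi t, μ (Iic x) ^ (-p - 1) ∂μ
      = ∫⁻ x in Ioi t, ENNReal.ofReal ((μ (Iic x))⁻¹.toReal ^ (p + 1)) ∂μ := by
        refine setLIntegral_congr_fun measurableSet_Ioi fun x hx ↦ ?_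
        rw [← ENNReal.ofReal_rpow_of_nonneg ENNReal.toReal_nonneg (by linarith),
          ENNReal.ofReal_toReal (hinv_ne_top x hx), ENNReal.inv_rpow, ← ENNReal.rpow_neg, neg_add']
    _ = ENNReal.ofReal (p + 1) * ∫⁻ s in Ioi 0,
          μ.restrict (Ioi t) {x | s ≤ (μ (Iic x))⁻¹.toReal} * ENNReal.ofReal (s ^ (p + 1 - 1)) :=
        lintegral_rpow_eq_lintegral_meas_le_mul _ (ae_of_all _ fun _ ↦ ENNReal.toReal_nonneg)
          measurable_measure_Iic.inv.ennreal_toReal.aemeasurable (by linarith)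
    _ ≤ ENNReal.ofReal (p + 1) * ∫⁻ s in Ioi 0,
          ((ENNReal.ofReal s)⁻¹ - ENNReal.ofReal u) * ENNReal.ofReal (s ^ p) := by
        rw [add_sub_cancel_right, hu_ofReal]
        gcongr _ * ?_
        exact setLIntegral_mono' measurableSet_Ioi fun s hs ↦
          mul_le_mul_left (measure_restrict_Ioi_le_toReal_inv_measure_Iic_le_sub t hs) _
    _ = ENNReal.ofReal p⁻¹ * μ (Iic t) ^ (-p) := by
        rw [lintegral_Ioi_inv_sub_mul_rpow hp hu, ← hu_ofReal, ENNReal.ofReal_rpow_of_pos hu,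
          ← ENNReal.ofReal_mul (by linarith), ← ENNReal.ofReal_mul (by positivity)]
        congr 1
        field_simp

lemma lintegral_measure_Iio_mul [SFinite μ] [SFinite κ] {h : α → ℝ≥0∞} (hh : Measurable h) :
    ∫⁻ x, κ (Iio x) * h x ∂μ = ∫⁻ t, ∫⁻ x in Ioi t, h x ∂μ ∂κ := by
  have hmeas : Measurable (Function.uncurry fun x t ↦ (Iio x).indicator (fun _ ↦ h x) t) :=
    (hh.comp measurable_fst).indicator (measurableSet_lt measurable_snd measurable_fst)
  calc ∫⁻ x, κ (Iio x) * h x ∂μ = ∫⁻ x, ∫⁻ t, (Iio x).indicator (fun _ ↦ h x) t ∂κ ∂μ := by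
        simp only [lintegral_indicator_const measurableSet_Iio, mul_comm]
    _ = ∫⁻ t, ∫⁻ x, (Iio x).indicator (fun _ ↦ h x) t ∂μ ∂κ :=
        lintegral_lintegral_swap hmeas.aemeasurable
    _ = ∫⁻ t, ∫⁻ x in Ioi t, h x ∂μ ∂κ := by
        simp only [← lintegral_indicator measurableSet_Ioi]
        rfl

lemma lintegral_measure_Iio_mul_measure_Iic_rpow_le [SFinite μ] [SFinite κ] {p : ℝ}
    (hp : 0 < p) :
    ∫⁻ x, κ (Iio x) * μ (Iic x) ^ (-p - 1) ∂μ ≤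
      ENNReal.ofReal p⁻¹ * ∫⁻ t, μ (Iic t) ^ (-p) ∂κ := by
  rw [lintegral_measure_Iio_mul (measurable_measure_Iic.pow_const _),
    ← lintegral_const_mul _ (measurable_measure_Iic.pow_const _)]
  exact lintegral_mono fun t ↦ setLIntegral_Ioi_measure_Iic_rpow_le hp t

end LinearOrder

section Average

variable {p q a b : ℝ} {f : ℝ → ℝ≥0∞}

lemma setLAverage_Ioc_eq (f : ℝ → ℝ≥0∞) (a x : ℝ) :
    ⨍⁻ y in Ioc a x, f y ∂volume = (ENNReal.ofReal (x - a))⁻¹ * ∫⁻ y in Ioc a x, f y := by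
  rw [setLAverage_eq, Real.volume_Ioc, ENNReal.div_eq_inv_mul]

lemma measurable_setLAverage_Ioc : Measurable fun x ↦ ⨍⁻ y in Ioc a x, f y ∂volume := by
  have hmono : Monotone fun x ↦ ∫⁻ y in Ioc a x, f y := fun _ _ h ↦
    lintegral_mono_set (Ioc_subset_Ioc_right h)
  simp only [setLAverage_Ioc_eq]
  exact Measurable.mul (by fun_prop) hmono.measurable

lemma setLAverage_Ioc_add_const {x : ℝ} (hax : a < x) (c : ℝ≥0∞) :
    ⨍⁻ y in Ioc a x, (f y + c) ∂volume = (⨍⁻ y in Ioc a x, f y ∂volume) + c := by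
  have hvol : volume (Ioc a x) ≠ 0 := by simpa using hax
  have hconst : ⨍⁻ _y in Ioc a x, c ∂volume = c := setLAverage_const hvol (by simp) c
  rw [laverage, lintegral_add_right _ measurable_const]
  exact congrArg (_ + ·) hconst

lemma setLAverage_Ioc_rpow {x : ℝ} (hax : a < x) (r : ℝ) :
    (⨍⁻ y in Ioc a x, f y ∂volume) ^ r =
      ENNReal.ofReal (x - a) ^ (-r) * (∫⁻ y in Ioc a x, f y) ^ r := by
  have hsub : ENNReal.ofReal (x - a) ≠ 0 := by simpa using hax
  rw [setLAverage_Ioc_eq, ENNReal.mul_rpow_eq_ite, ENNReal.inv_rpow, ← ENNReal.rpow_neg]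
  simp [hsub]

lemma withDensity_restrict_Ioc_Iic {x : ℝ} (hx : x ≤ b) :
    (volume.restrict (Ioc a b)).withDensity f (Iic x) = ∫⁻ y in Ioc a x, f y := by
  rw [withDensity_apply _ measurableSet_Iic, Measure.restrict_restrict measurableSet_Iic,
    inter_comm, Ioc_inter_Iic, min_eq_right hx]

lemma withDensity_restrict_Ioc_Iio {x : ℝ} (hx : x ≤ b) :
    (volume.restrict (Ioc a b)).withDensity f (Iio x) = ∫⁻ y in Ioc a x, f y := by
  rw [← withDensity_restrict_Ioc_Iic hx]
  exact measure_congr ((withDensity_absolutelyContinuous _ f).ae_eq Iio_ae_eq_Iic)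

lemma setLIntegral_mul_setLAverage_rpow_le (hp : 0 < p)
    (hf : AEMeasurable f (volume.restrict (Ioc a b))) :
    ∫⁻ x in Ioc a b, f x * (⨍⁻ y in Ioc a x, f y ∂volume) ^ (-p - 1) ≤
      ENNReal.ofReal ((p + 1) / p) * ∫⁻ x in Ioc a b, (⨍⁻ y in Ioc a x, f y ∂volume) ^ (-p) := by
  set w : ℝ → ℝ≥0∞ := fun t ↦ ENNReal.ofReal (p + 1) * ENNReal.ofReal (t - a) ^ p with hw_def
  have hw : Measurable w := by fun_prop
  set μ := (volume.restrict (Ioc a b)).withDensity f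
  set κ := (volume.restrict (Ioc a b)).withDensity w with hκ_def
  have hμ : ∀ x ∈ Ioc a b, μ (Iic x) = ∫⁻ y in Ioc a x, f y := fun x hx ↦
    withDensity_restrict_Ioc_Iic hx.2
  have hκ : ∀ x ∈ Ioc a b, κ (Iio x) = ENNReal.ofReal (x - a) ^ (p + 1) := fun x hx ↦ by
    rw [hκ_def, withDensity_restrict_Ioc_Iio hx.2, lintegral_Ioc_sub_rpow (by linarith) hx.1.le]
  have hμ_meas : ∀ r : ℝ, Measurable fun x ↦ μ (Iic x) ^ r := measurable_measure_Iic.pow_const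
  have hκμ_meas : Measurable fun x ↦ κ (Iio x) * μ (Iic x) ^ (-p - 1) :=
    measurable_measure_Iio.mul (hμ_meas _)
  calc ∫⁻ x in Ioc a b, f x * (⨍⁻ y in Ioc a x, f y ∂volume) ^ (-p - 1)
      = ∫⁻ x in Ioc a b, f x * (κ (Iio x) * μ (Iic x) ^ (-p - 1)) := by
        refine setLIntegral_congr_fun measurableSet_Ioc fun x hx ↦ ?_
        simp only [setLAverage_Ioc_rpow hx.1, hμ x hx, hκ x hx, neg_sub, sub_neg_eq_add,
          add_comm 1 p]
    _ = ∫⁻ x, κ (Iio x) * μ (Iic x) ^ (-p - 1) ∂μ :=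
        (lintegral_withDensity_eq_lintegral_mul₀ hf hκμ_meas.aemeasurable).symm
    _ ≤ ENNReal.ofReal p⁻¹ * ∫⁻ t, μ (Iic t) ^ (-p) ∂κ :=
        lintegral_measure_Iio_mul_measure_Iic_rpow_le hp
    _ = ENNReal.ofReal p⁻¹ * ∫⁻ t in Ioc a b,
          ENNReal.ofReal (p + 1) * (⨍⁻ y in Ioc a t, f y ∂volume) ^ (-p) := by
        rw [hκ_def,
          lintegral_withDensity_eq_lintegral_mul₀ hw.aemeasurable (hμ_meas _).aemeasurable]
        congr 1
        refine setLIntegral_congr_fun measurableSet_Ioc fun t ht ↦ ?_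
        simp only [Pi.mul_apply, setLAverage_Ioc_rpow ht.1, hμ t ht, neg_neg, hw_def, mul_assoc]
    _ = ENNReal.ofReal ((p + 1) / p) * ∫⁻ x in Ioc a b, (⨍⁻ y in Ioc a x, f y ∂volume) ^ (-p) := by
        rw [lintegral_const_mul _ (measurable_setLAverage_Ioc.pow_const _), ← mul_assoc,
          ← ENNReal.ofReal_mul (by positivity), inv_mul_eq_div]

lemma hardy_negative_exponent_of_ne_top (hp : 0 < p) (hq : 0 < q)
    (hf : AEMeasurable f (volume.restrict (Ioc a b)))
    (hfin : ∫⁻ x in Ioc a b, (⨍⁻ y in Ioc a x, f y ∂volume) ^ (-p) ≠ ⊤) :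
    ∫⁻ x in Ioc a b, (⨍⁻ y in Ioc a x, f y ∂volume) ^ (-p) ≤
      ENNReal.ofReal (((p + 1) / p) ^ q) *
        ∫⁻ x in Ioc a b, (⨍⁻ y in Ioc a x, f y ∂volume) ^ (-p + q) * f x ^ (-q) := by
  set A : ℝ → ℝ≥0∞ := fun x ↦ ⨍⁻ y in Ioc a x, f y ∂volume
  set c := p / (p + 1) with hc_def
  have hc : 0 < c := by positivity
  have hc_rpow : c ^ (-q) = ((p + 1) / p) ^ q := by
    rw [Real.rpow_neg hc.le, ← Real.inv_rpow hc.le, inv_div]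
  have hA : ∀ r : ℝ, Measurable fun x ↦ A x ^ r := measurable_setLAverage_Ioc.pow_const
  have hA_ne_zero : ∀ᵐ x ∂volume.restrict (Ioc a b), A x ≠ 0 := by
    filter_upwards [ae_lt_top (hA _) hfin] with x hx hzero
    simp [hzero, ENNReal.zero_rpow_of_neg, hp] at hx
  have hone_add : ∫⁻ x in Ioc a b, (1 + ENNReal.ofReal q) * A x ^ (-p) ≤
      ENNReal.ofReal (c ^ (-q)) * (∫⁻ x in Ioc a b, A x ^ (-p + q) * f x ^ (-q)) +
        ENNReal.ofReal q * (ENNReal.ofReal c * ∫⁻ x in Ioc a b, f x * A x ^ (-p - 1)) := by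
    have hAf : AEMeasurable (fun x ↦ f x * A x ^ (-p - 1)) (volume.restrict (Ioc a b)) :=
      hf.mul (hA _).aemeasurable
    rw [← lintegral_const_mul' _ _ ENNReal.ofReal_ne_top,
      ← lintegral_const_mul' _ _ ENNReal.ofReal_ne_top,
      ← lintegral_const_mul' _ _ ENNReal.ofReal_ne_top,
      ← lintegral_add_right' _ ((hAf.const_mul _).const_mul _)]
    exact lintegral_mono_ae (hA_ne_zero.mono fun x hx ↦ one_add_mul_rpow_neg_le hp hq hc hx)
  have hself : ENNReal.ofReal c * ∫⁻ x in Ioc a b, f x * A x ^ (-p - 1) ≤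
      ∫⁻ x in Ioc a b, A x ^ (-p) := by
    have hcancel : ENNReal.ofReal c * ENNReal.ofReal ((p + 1) / p) = 1 := by
      rw [← ENNReal.ofReal_mul hc.le, hc_def, div_mul_div_cancel₀ (by positivity),
        div_self hp.ne', ENNReal.ofReal_one]
    rw [← one_mul (∫⁻ x in Ioc a b, A x ^ (-p)), ← hcancel, mul_assoc]
    gcongr
    exact setLIntegral_mul_setLAverage_rpow_le hp hf
  rw [lintegral_const_mul _ (hA _), add_mul, one_mul, hc_rpow] at hone_add
  exact (ENNReal.add_le_add_iff_right (ENNReal.mul_ne_top ENNReal.ofReal_ne_top hfin)).1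
    (hone_add.trans (by gcongr))

lemma lintegral_add_const_rpow_neg_ne_top {α : Type*} [MeasurableSpace α] {μ : Measure α}
    [IsFiniteMeasure μ] (hp : 0 < p) {δ : ℝ≥0∞} (hδ : δ ≠ 0) (g : α → ℝ≥0∞) :
    ∫⁻ x, (g x + δ) ^ (-p) ∂μ ≠ ⊤ := by
  have hδp : δ ^ (-p) ≠ ⊤ := by simp [ENNReal.rpow_eq_top_iff, hδ, hp.le]
  refine ne_top_of_le_ne_top ?_ (lintegral_mono fun x ↦
    ennreal_rpow_le_rpow_of_nonpos (neg_nonpos.2 hp.le) (le_add_self : δ ≤ g x + δ))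
  rw [lintegral_const]
  exact ENNReal.mul_ne_top hδp (measure_ne_top μ univ)

lemma setLIntegral_setLAverage_add_const_rpow_neg_le (hq : 0 < q) (hpq : q ≤ p)
    (hf : AEMeasurable f (volume.restrict (Ioc a b))) {δ : ℝ≥0∞} (hδ : δ ≠ 0) :
    ∫⁻ x in Ioc a b, ((⨍⁻ y in Ioc a x, f y ∂volume) + δ) ^ (-p) ≤
      ENNReal.ofReal (((p + 1) / p) ^ q) *
        ∫⁻ x in Ioc a b, (⨍⁻ y in Ioc a x, f y ∂volume) ^ (-p + q) * f x ^ (-q) := by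
  have hp : 0 < p := hq.trans_le hpq
  have hadd : ∫⁻ x in Ioc a b, (⨍⁻ y in Ioc a x, (f y + δ) ∂volume) ^ (-p) =
      ∫⁻ x in Ioc a b, ((⨍⁻ y in Ioc a x, f y ∂volume) + δ) ^ (-p) :=
    setLIntegral_congr_fun measurableSet_Ioc fun x hx ↦ by
      simp only [setLAverage_Ioc_add_const hx.1]
  rw [← hadd]
  refine (hardy_negative_exponent_of_ne_top hp hq (hf.add_const δ)
    (hadd ▸ lintegral_add_const_rpow_neg_ne_top hp hδ _)).trans ?_
  gcongr _ * ?_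
  refine setLIntegral_mono' measurableSet_Ioc fun x hx ↦ ?_
  rw [setLAverage_Ioc_add_const hx.1]
  exact mul_le_mul' (ennreal_rpow_le_rpow_of_nonpos (by linarith) le_self_add)
    (ennreal_rpow_le_rpow_of_nonpos (neg_nonpos.2 hq.le) le_self_add)

theorem hardy_negative_exponent_general_general (hq : 0 < q) (hpq : q ≤ p)
    (hf : AEMeasurable f (volume.restrict (Ioc a b))) :
    ∫⁻ x in Ioc a b, (⨍⁻ y in Ioc a x, f y ∂volume) ^ (-p) ≤
      ENNReal.ofReal (((p + 1) / p) ^ q) *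
        ∫⁻ x in Ioc a b, (⨍⁻ y in Ioc a x, f y ∂volume) ^ (-p + q) * f x ^ (-q) := by
  set A : ℝ → ℝ≥0∞ := fun x ↦ ⨍⁻ y in Ioc a x, f y ∂volume
  have hmono : ∀ x, Monotone fun n : ℕ ↦ (A x + (n : ℝ≥0∞)⁻¹) ^ (-p) := fun x m n hmn ↦
    ennreal_rpow_le_rpow_of_nonpos (by linarith) (by gcongr)
  have htendsto : ∀ x, Tendsto (fun n : ℕ ↦ (A x + (n : ℝ≥0∞)⁻¹) ^ (-p)) atTop
      (𝓝 (A x ^ (-p))) := fun x ↦ by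
    have hA := ENNReal.tendsto_inv_nat_nhds_zero.const_add (A x)
    rw [add_zero] at hA
    exact (ENNReal.continuous_rpow_const.tendsto _).comp hA
  refine le_of_tendsto' (lintegral_tendsto_of_tendsto_of_monotone
    (fun n ↦ ((measurable_setLAverage_Ioc.add_const _).pow_const _).aemeasurable)
    (ae_of_all _ hmono) (ae_of_all _ htendsto)) fun n ↦ ?_
  exact setLIntegral_setLAverage_add_const_rpow_neg_le hq hpq hf (by simp)

end Average

/-- **Theorem 1 (sharp integral Hardy-type inequality for negative exponents).**
For `p ≥ q > 0`, `a < b`, and a measurable `f : [a,b] → (0,∞)`,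
`∫_a^b ((1/(x-a)) ∫_a^x f)^{-p} dx
  ≤ ((p+1)/p)^q ∫_a^b ((1/(x-a)) ∫_a^x f)^{-p+q} f(x)^{-q} dx`,
both sides interpreted in `[0,∞]`. -/
theorem hardy_negative_exponent_general (p q a b : ℝ) (hq : 0 < q) (hpq : q ≤ p)
    (hab : a < b) (f : ℝ → ℝ) (hfm : Measurable f)
    (hfpos : ∀ x ∈ Set.Icc a b, 0 < f x) :
    (∫⁻ x in Set.Ioc a b,
        ((ENNReal.ofReal (x - a))⁻¹ * ∫⁻ y in Set.Ioc a x, ENNReal.ofReal (f y)) ^ (-p))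
      ≤ ENNReal.ofReal (((p + 1) / p) ^ q) *
        ∫⁻ x in Set.Ioc a b,
          ((ENNReal.ofReal (x - a))⁻¹ * ∫⁻ y in Set.Ioc a x, ENNReal.ofReal (f y)) ^ (-p + q) *
            (ENNReal.ofReal (f x)) ^ (-q) := by
  simpa only [setLAverage_Ioc_eq] using hardy_negative_exponent_general_general hq hpq
    (hfm.ennreal_ofReal.aemeasurable (μ := volume.restrict (Ioc a b)))
end

section
/- Let q > 1, M ≥ 1, and let f : [0,1) → (0,∞) be non-decreasing and satisfy ((1/t) ∫_0^t f(y) dy) · ((1/t) ∫_0^t f(y)^{-1/(q-1)} dy)^{q-1} ≤ M for every t ∈ (0,1]. Let p_0 ∈ [1,q] be the root of ((q−p_0)/(q−1))·(M·p_0)^{1/(q-1)} = 1. Then for every p ∈ (p_0, q] there exists a constant M' = M'(p,q,M) > 0 such that ((1/t) ∫_0^t f(y) dy) · ((1/t) ∫_0^t f(y)^{-1/(p-1)} dy)^{p-1} ≤ M' for every t ∈ (0,1]; in particular f^{-1/(p-1)} is integrable on (0,1). -/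
open MeasureTheory Set

/-!
Write `Φ(t) = ∫₀ᵗ f` and `H(t) = ∫₀ᵗ f^{-1/(q-1)}`, and let `A(t) = Φ(t) H(t)^{q-1} / t^q` be the
`A_q` ratio, so that `1 ≤ A ≤ M`. If `M m^q = μ^{q-1}`, weighted AM-GM applied to the logarithmic
derivative shows that `Φ H^{(q-1)μ} / t^{qm} = A H^{(q-1)(μ-1)} / t^{q(m-1)}` is non-decreasing.
Since `A` is bounded above and below, `H(t) / H(T) ≤ K (t / T)^e` with
`e = q(m-1) / ((q-1)(μ-1))`. As `f^{-1/(q-1)}` is non-increasing, it is at most `H(t) / t`, hence at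
most a multiple of `t^{e-1}`, and its power `f^{-1/(p-1)}` is integrable with the right bound as
soon as `e > (q-p)/(q-1)`. Choosing `μ = m (q-1)/(q-p)`, this says `p < m`, which is exactly
`M p ((q-p)/(q-1))^{q-1} < 1`, i.e. `p > p₀`.
-/

open Filter Topology

section RealInequalities

lemma mul_le_add_mul_of_rpow_le {q m x y : ℝ} (hq : 1 ≤ q) (hm : 0 ≤ m) (hx : 0 ≤ x) (hy : 0 ≤ y)
    (h : m ^ q ≤ x * y ^ (q - 1)) : q * m ≤ x + (q - 1) * y := by
  have hq0 : 0 < q := by linarith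
  have hamgm : x ^ (1 / q) * y ^ ((q - 1) / q) ≤ 1 / q * x + (q - 1) / q * y :=
    Real.geom_mean_le_arith_mean2_weighted (by positivity) (div_nonneg (by linarith) hq0.le) hx hy
      (by field_simp; ring)
  calc q * m = q * (m ^ q) ^ (1 / q) := by
        rw [← Real.rpow_mul hm, mul_one_div_cancel hq0.ne', Real.rpow_one]
    _ ≤ q * (x * y ^ (q - 1)) ^ (1 / q) := by gcongr
    _ = q * (x ^ (1 / q) * y ^ ((q - 1) / q)) := by
        rw [Real.mul_rpow hx (by positivity), ← Real.rpow_mul hy, mul_one_div]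
    _ ≤ q * (1 / q * x + (q - 1) / q * y) := by gcongr
    _ = x + (q - 1) * y := by field_simp

lemma rpow_neg_one_div_rpow {a x : ℝ} (ha : a ≠ 0) (hx : 0 ≤ x) : (x ^ (-(1 / a))) ^ a = x⁻¹ := by
  rw [← Real.rpow_mul hx, neg_mul, one_div_mul_cancel ha, Real.rpow_neg_one]

lemma mul_rpow_neg_le_inv_mul_add {q A B x : ℝ} (hq : 1 < q) (hA : 0 < A) (hB : 0 < B)
    (hx : 0 < x) :
    q * (A * B ^ (q - 1)) ^ (-(1 / q)) ≤ A⁻¹ * x + (q - 1) * B⁻¹ * x ^ (-(1 / (q - 1))) := by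
  rw [mul_assoc (q - 1)]
  refine mul_le_add_mul_of_rpow_le hq.le (by positivity) (by positivity) (by positivity) ?_
  rw [rpow_neg_one_div_rpow (by linarith) (by positivity), Real.mul_rpow (by positivity)
    (by positivity), rpow_neg_one_div_rpow (by linarith) hx.le, Real.inv_rpow hB.le]
  exact le_of_eq (by field_simp)

lemma mul_rpow_lt_one {a x y : ℝ} (ha : 0 ≤ a) (hx : x ≠ 1) (hy : 0 < y)
    (h : x + a * y ≤ 1 + a) : x * y ^ a < 1 := by
  have hx_lt : x < Real.exp (x - 1) := by linarith [Real.add_one_lt_exp (sub_ne_zero.2 hx)]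
  have hy_le : y ≤ Real.exp (y - 1) := by linarith [Real.add_one_le_exp (y - 1)]
  calc x * y ^ a < Real.exp (x - 1) * y ^ a := by gcongr
    _ ≤ Real.exp (x - 1) * Real.exp (y - 1) ^ a := by gcongr
    _ = Real.exp (x - 1 + (y - 1) * a) := by rw [← Real.exp_mul, Real.exp_add]
    _ ≤ 1 := Real.exp_le_one_iff.2 (by linarith)

lemma strictAntiOn_mul_sub_rpow {q : ℝ} :
    StrictAntiOn (fun p : ℝ => p * (q - p) ^ (q - 1)) (Ico 1 q) := by
  intro a ha b hb hab
  have ha0 : 0 < a := by linarith [ha.1]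
  have hqa : 0 < q - a := sub_pos.2 ha.2
  have hqb : 0 < q - b := sub_pos.2 hb.2
  have hle : b / a + (q - 1) * ((q - b) / (q - a)) ≤ 1 + (q - 1) := by
    have hdiv_le : (b - a) / a ≤ b - a := div_le_self (by linarith) ha.1
    have hle_div : b - a ≤ (q - 1) * ((b - a) / (q - a)) := by
      rw [← mul_div_assoc, le_div_iff₀ hqa]
      nlinarith [ha.1]
    have hratio : b / a = 1 + (b - a) / a := by field_simp; ring
    have hratio_sub : (q - b) / (q - a) = 1 - (b - a) / (q - a) := by field_simp; ring
    rw [hratio, hratio_sub]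
    linarith
  have hne : b / a ≠ 1 := ((one_lt_div ha0).2 hab).ne'
  have hlt : b / a * ((q - b) / (q - a)) ^ (q - 1) < 1 :=
    mul_rpow_lt_one (by linarith [hb.1]) hne (div_pos hqb hqa) hle
  rw [Real.div_rpow hqb.le hqa.le, div_mul_div_comm, div_lt_one (by positivity)] at hlt
  exact hlt

lemma mul_mul_div_rpow_lt_one {q M p₀ p : ℝ} (hM : 0 < M) (hp₀ : 1 ≤ p₀)
    (hp₀eq : ((q - p₀) / (q - 1)) * (M * p₀) ^ (1 / (q - 1)) = 1) (hp : p₀ < p) (hpq : p < q) :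
    M * p * ((q - p) / (q - 1)) ^ (q - 1) < 1 := by
  have hq1 : 0 < q - 1 := by linarith
  have hqp₀ : 0 < q - p₀ := by linarith
  have hqp : 0 < q - p := by linarith
  have hroot : M * p₀ * ((q - p₀) / (q - 1)) ^ (q - 1) = 1 := by
    have := congrArg (· ^ (q - 1)) hp₀eq
    simp only [Real.one_rpow] at this
    rwa [Real.mul_rpow (by positivity) (by positivity), ← Real.rpow_mul (by positivity),
      one_div_mul_cancel hq1.ne', Real.rpow_one, mul_comm] at this
  have hanti : p * (q - p) ^ (q - 1) < p₀ * (q - p₀) ^ (q - 1) :=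
    strictAntiOn_mul_sub_rpow ⟨hp₀, hp.trans hpq⟩ ⟨hp₀.trans hp.le, hpq⟩ hp
  calc M * p * ((q - p) / (q - 1)) ^ (q - 1)
      = M / (q - 1) ^ (q - 1) * (p * (q - p) ^ (q - 1)) := by
        rw [Real.div_rpow hqp.le hq1.le]; ring
    _ < M / (q - 1) ^ (q - 1) * (p₀ * (q - p₀) ^ (q - 1)) := by gcongr
    _ = M * p₀ * ((q - p₀) / (q - 1)) ^ (q - 1) := by
        rw [Real.div_rpow hqp₀.le hq1.le]; ring
    _ = 1 := hroot

lemma exists_lyapunov_exponents {q M p : ℝ} (hM : 0 < M) (hp : 1 < p) (hpq : p < q)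
    (h : M * p * ((q - p) / (q - 1)) ^ (q - 1) < 1) :
    ∃ μ m : ℝ, 1 < μ ∧ 0 < m ∧ M * m ^ q = μ ^ (q - 1) ∧
      (q - 1) / (p - 1) * (1 - q * (m - 1) / ((q - 1) * (μ - 1))) < 1 := by
  have hq1 : 0 < q - 1 := by linarith
  have hp1 : 0 < p - 1 := by linarith
  set η := (q - p) / (q - 1) with hη
  have hη0 : 0 < η := div_pos (by linarith) hq1
  have hη1 : η < 1 := (div_lt_one hq1).2 (by linarith)
  set m := 1 / (M * η ^ (q - 1)) with hm
  have hm0 : 0 < m := by positivity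
  have hpm : p < m := (lt_div_iff₀ (by positivity)).2 (by linarith)
  have hμ : 1 < m / η := (one_lt_div hη0).2 (by linarith)
  refine ⟨m / η, m, hμ, hm0, ?_, ?_⟩
  · have hmM : M * m = 1 / η ^ (q - 1) := by rw [hm]; field_simp
    calc M * m ^ q = M * m * m ^ (q - 1) := by rw [Real.rpow_sub_one hm0.ne']; field_simp
      _ = (m / η) ^ (q - 1) := by rw [hmM, Real.div_rpow hm0.le hη0.le]; ring
  · have hη_lt : η < q * (m - 1) / ((q - 1) * (m / η - 1)) := by
      rw [lt_div_iff₀ (mul_pos hq1 (by linarith))]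
      have hqη : (q - 1) * η = q - p := by rw [hη]; field_simp
      calc η * ((q - 1) * (m / η - 1)) = (q - 1) * m - (q - 1) * η := by field_simp
        _ < q * (m - 1) := by rw [hqη]; linarith
    calc (q - 1) / (p - 1) * (1 - q * (m - 1) / ((q - 1) * (m / η - 1)))
        < (q - 1) / (p - 1) * (1 - η) := by gcongr
      _ = 1 := by rw [hη]; field_simp; ring

lemma lyapunov_deriv_nonneg {q M m μ x c P Q : ℝ} (hq : 1 < q) (hm : 0 ≤ m) (hμ : 0 ≤ μ)
    (hMm : M * m ^ q = μ ^ (q - 1)) (hx : 0 < x) (hc : 0 < c) (hP : 0 < P) (hQ : 0 < Q)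
    (hPQ : P * Q ^ (q - 1) ≤ M * x ^ q) :
    0 ≤ c / P + (q - 1) * μ * (c ^ (-(1 / (q - 1))) / Q) - q * m * (1 / x) := by
  have hq1 : 0 < q - 1 := by linarith
  have hprod : m ^ q ≤ c * x / P * (μ * c ^ (-(1 / (q - 1))) * x / Q) ^ (q - 1) := by
    have hquot : c * x / P * (μ * c ^ (-(1 / (q - 1))) * x / Q) ^ (q - 1) =
        m ^ q * (M * x ^ q / (P * Q ^ (q - 1))) := by
      rw [Real.div_rpow (by positivity) hQ.le, Real.mul_rpow (by positivity) hx.le,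
        Real.mul_rpow hμ (by positivity), rpow_neg_one_div_rpow hq1.ne' hc.le, ← hMm,
        Real.rpow_sub_one hx.ne']
      field_simp
    rw [hquot]
    exact le_mul_of_one_le_right (by positivity) ((one_le_div (by positivity)).2 hPQ)
  have hamgm := mul_le_add_mul_of_rpow_le hq.le hm (by positivity) (by positivity) hprod
  have hcommon : c / P + (q - 1) * μ * (c ^ (-(1 / (q - 1))) / Q) - q * m * (1 / x) =
      (c * x / P + (q - 1) * (μ * c ^ (-(1 / (q - 1))) * x / Q) - q * m) / x := by
    field_simp
  rw [hcommon]
  exact div_nonneg (by linarith) hx.le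

end RealInequalities

section Calculus

variable {f : ℝ → ℝ} {a b : ℝ}

lemma monotoneOn_of_hasDerivWithinAt_Ici_nonneg {f' : ℝ → ℝ} (hf : ContinuousOn f (Icc a b))
    (hf' : ∀ x ∈ Ico a b, HasDerivWithinAt f (f' x) (Ici x) x) (hf'0 : ∀ x ∈ Ico a b, 0 ≤ f' x) :
    MonotoneOn f (Icc a b) := by
  intro u hu v hv huv
  have hsub : Ico u v ⊆ Ico a b := Ico_subset_Ico hu.1 hv.2
  exact image_le_of_deriv_right_le_deriv_boundary (f := fun _ => f u) (f' := fun _ => 0)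
    continuousOn_const (fun x _ => hasDerivWithinAt_const _ _ _) le_rfl
    (hf.mono (Icc_subset_Icc hu.1 hv.2)) (fun x hx => hf' x (hsub hx))
    (fun x hx => hf'0 x (hsub hx)) (right_mem_Icc.2 huv)

lemma exists_pos_tendsto_nhdsGT_of_monotoneOn (hf : MonotoneOn f (Ioo a b))
    (hpos : ∀ x ∈ Ioo a b, 0 < f x) {x : ℝ} (hx : x ∈ Ioo a b) :
    ∃ c, 0 < c ∧ Tendsto f (𝓝[>] x) (𝓝 c) := by
  have hsub : Ioo x b ⊆ Ioo a b := Ioo_subset_Ioo_left hx.1.le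
  have hlb : f x ∈ lowerBounds (f '' Ioo x b) := by
    rintro _ ⟨y, hy, rfl⟩
    exact hf hx (hsub hy) hy.1.le
  have hne : (Ioo x b).Nonempty := nonempty_Ioo.2 hx.2
  exact ⟨sInf (f '' Ioo x b), (hpos x hx).trans_le (le_csInf (hne.image f) hlb),
    (hf.mono hsub).tendsto_nhdsWithin_Ioo_right hne ⟨f x, hlb⟩⟩

lemma hasDerivWithinAt_integral_Ici_of_tendsto_nhdsGT {T x c : ℝ}
    (hfi : IntervalIntegrable f volume a T) (hx : x ∈ Ico a T) (hc : Tendsto f (𝓝[>] x) (𝓝 c)) :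
    HasDerivWithinAt (fun u => ∫ y in a..u, f y) c (Ici x) x := by
  have hfi_x : IntervalIntegrable f volume a x :=
    hfi.mono_set (uIcc_subset_uIcc_left (Icc_subset_uIcc ⟨hx.1, hx.2.le⟩))
  have hmeas : StronglyMeasurableAtFilter f (𝓝[>] x) :=
    AEStronglyMeasurable.stronglyMeasurableAtFilter_of_mem hfi.1.aestronglyMeasurable
      (mem_of_superset (Ioo_mem_nhdsGT hx.2) fun y hy => ⟨hx.1.trans_lt hy.1, hy.2.le⟩)
  exact intervalIntegral.integral_hasDerivWithinAt_of_tendsto_ae_right hfi_x hmeas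
    (hc.mono_left inf_le_left)

lemma integrableOn_Ioo_of_monotoneOn_of_abs_le {C : ℝ} (hf : MonotoneOn f (Ioo a b))
    (hC : ∀ x ∈ Ioo a b, |f x| ≤ C) : IntegrableOn f (Ioo a b) :=
  IntegrableOn.of_bound measure_Ioo_lt_top
    (aemeasurable_restrict_of_monotoneOn measurableSet_Ioo hf).aestronglyMeasurable C
    ((ae_restrict_iff' measurableSet_Ioo).2 (Eventually.of_forall hC))

lemma integrableOn_Ioo_of_monotoneOn_of_nonneg {u : ℝ} (hf : MonotoneOn f (Ioo a b))
    (hf0 : ∀ x ∈ Ioo a b, 0 ≤ f x) (hu : u ∈ Ioo a b) : IntegrableOn f (Ioo a u) := by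
  have hsub : Ioo a u ⊆ Ioo a b := Ioo_subset_Ioo_right hu.2.le
  refine integrableOn_Ioo_of_monotoneOn_of_abs_le (C := f u) (hf.mono hsub) fun x hx => ?_
  rw [abs_of_nonneg (hf0 x (hsub hx))]
  exact hf (hsub hx) hu hx.2.le

lemma mul_le_integral_of_antitoneOn {T t : ℝ} (hf : AntitoneOn f (Ioo 0 T))
    (hfi : IntervalIntegrable f volume 0 T) (ht : t ∈ Ioo 0 T) :
    t * f t ≤ ∫ y in (0 : ℝ)..t, f y := by
  have hfi_t : IntervalIntegrable f volume 0 t :=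
    hfi.mono_set (uIcc_subset_uIcc_left (Icc_subset_uIcc ⟨ht.1.le, ht.2.le⟩))
  have := intervalIntegral.integral_mono_on_of_le_Ioo ht.1.le
    (intervalIntegrable_const (c := f t) (μ := volume)) hfi_t
    fun y hy => hf ⟨hy.1, hy.2.trans ht.2⟩ ht hy.2.le
  simpa using this

lemma intervalIntegrable_div_rpow {T ρ : ℝ} (hρ : -1 < ρ) :
    IntervalIntegrable (fun t => (t / T) ^ ρ) volume 0 T := by
  simpa [div_eq_inv_mul] using
    (intervalIntegral.intervalIntegrable_rpow' (a := 0) (b := 1) hρ).comp_mul_left (c := T⁻¹)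

lemma integral_div_rpow {T ρ : ℝ} (hT : 0 < T) (hρ : -1 < ρ) :
    ∫ t in (0 : ℝ)..T, (t / T) ^ ρ = T / (ρ + 1) := by
  rw [intervalIntegral.integral_comp_div (fun u => u ^ ρ) hT.ne', zero_div, div_self hT.ne',
    integral_rpow (Or.inl hρ), Real.one_rpow, Real.zero_rpow (by linarith), sub_zero, smul_eq_mul,
    mul_one_div]

end Calculus

section ReverseHolder

variable {g : ℝ → ℝ} {T K e r : ℝ}

lemma rpow_le_of_antitoneOn_of_integral_le (hg : AntitoneOn g (Ioo 0 T))
    (hg0 : ∀ x ∈ Ioo 0 T, 0 ≤ g x) (hgi : IntervalIntegrable g volume 0 T) (hK : 0 ≤ K)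
    (hr : 0 ≤ r) {t : ℝ} (ht : t ∈ Ioo 0 T)
    (hgrowth : ∫ y in (0 : ℝ)..t, g y ≤ K * (t / T) ^ e * ∫ y in (0 : ℝ)..T, g y) :
    g t ^ r ≤ K ^ r * ((1 / T) * ∫ y in (0 : ℝ)..T, g y) ^ r * (t / T) ^ (r * (e - 1)) := by
  have ht0 : 0 < t := ht.1
  have hT : 0 < T := ht.1.trans ht.2
  have hG : 0 ≤ ∫ y in (0 : ℝ)..T, g y := by
    rw [intervalIntegral.integral_of_le hT.le, integral_Ioc_eq_integral_Ioo]
    exact setIntegral_nonneg measurableSet_Ioo hg0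
  have hgt : g t ≤ K * ((1 / T) * ∫ y in (0 : ℝ)..T, g y) * (t / T) ^ (e - 1) := by
    refine le_of_mul_le_mul_left ?_ ht0
    calc t * g t ≤ K * (t / T) ^ e * ∫ y in (0 : ℝ)..T, g y :=
          (mul_le_integral_of_antitoneOn hg hgi ht).trans hgrowth
      _ = t * (K * ((1 / T) * ∫ y in (0 : ℝ)..T, g y) * (t / T) ^ (e - 1)) := by
          rw [Real.rpow_sub_one (by positivity)]; field_simp
  calc g t ^ r ≤ (K * ((1 / T) * ∫ y in (0 : ℝ)..T, g y) * (t / T) ^ (e - 1)) ^ r :=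
        Real.rpow_le_rpow (hg0 t ht) hgt hr
    _ = K ^ r * ((1 / T) * ∫ y in (0 : ℝ)..T, g y) ^ r * (t / T) ^ (r * (e - 1)) := by
        rw [Real.mul_rpow (by positivity) (by positivity), Real.mul_rpow hK (by positivity),
          ← Real.rpow_mul (by positivity), mul_comm r]

lemma reverse_holder_of_antitoneOn_of_integral_le (hT : 0 < T) (hg : AntitoneOn g (Ioo 0 T))
    (hg0 : ∀ x ∈ Ioo 0 T, 0 ≤ g x) (hgi : IntervalIntegrable g volume 0 T) (hK : 0 ≤ K)
    (hr : 0 ≤ r) (her : r * (1 - e) < 1)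
    (hgrowth : ∀ t ∈ Ioo 0 T, ∫ y in (0 : ℝ)..t, g y ≤ K * (t / T) ^ e * ∫ y in (0 : ℝ)..T, g y) :
    IntervalIntegrable (fun y => g y ^ r) volume 0 T ∧
      (1 / T) * ∫ y in (0 : ℝ)..T, g y ^ r ≤
        K ^ r / (1 - r * (1 - e)) * ((1 / T) * ∫ y in (0 : ℝ)..T, g y) ^ r := by
  have hbound := fun t ht => rpow_le_of_antitoneOn_of_integral_le hg hg0 hgi hK hr ht (hgrowth t ht)
  set A := (1 / T) * ∫ y in (0 : ℝ)..T, g y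
  have hρ : -1 < r * (e - 1) := by linarith
  have hmajor : IntervalIntegrable (fun t => K ^ r * A ^ r * (t / T) ^ (r * (e - 1))) volume 0 T :=
    (intervalIntegrable_div_rpow hρ).const_mul _
  have hint : IntervalIntegrable (fun y => g y ^ r) volume 0 T := by
    rw [intervalIntegrable_iff_integrableOn_Ioo_of_le hT.le] at hmajor hgi ⊢
    refine hmajor.mono' (hgi.aemeasurable.pow_const r).aestronglyMeasurable ?_
    refine (ae_restrict_iff' measurableSet_Ioo).2 (Eventually.of_forall fun t ht => ?_)
    rw [Real.norm_of_nonneg (Real.rpow_nonneg (hg0 t ht) r)]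
    exact hbound t ht
  refine ⟨hint, ?_⟩
  calc (1 / T) * ∫ y in (0 : ℝ)..T, g y ^ r
      ≤ (1 / T) * ∫ t in (0 : ℝ)..T, K ^ r * A ^ r * (t / T) ^ (r * (e - 1)) := by
        gcongr
        exact intervalIntegral.integral_mono_on_of_le_Ioo hT.le hint hmajor hbound
    _ = (1 / T) * (K ^ r * A ^ r * (T / (1 - r * (1 - e)))) := by
        rw [intervalIntegral.integral_const_mul, integral_div_rpow hT hρ]; ring_nf
    _ = K ^ r / (1 - r * (1 - e)) * A ^ r := by field_simp

end ReverseHolder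

/-- The weight `f^{-1/(p-1)}` dual to `f` in the Muckenhoupt class `A_p`. -/
noncomputable def dualWeight (p : ℝ) (f : ℝ → ℝ) : ℝ → ℝ := fun y => f y ^ (-(1 / (p - 1)))

/-- The quantity that the `A_p` condition bounds on `(0, t)`: the mean of `f` times the `(p-1)`-st
power of the mean of its dual weight. -/
noncomputable def muckenhouptRatio (p : ℝ) (f : ℝ → ℝ) (t : ℝ) : ℝ :=
  ((1 / t) * ∫ y in (0 : ℝ)..t, f y) * ((1 / t) * ∫ y in (0 : ℝ)..t, dualWeight p f y) ^ (p - 1)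

section MuckenhouptRatio

variable {f : ℝ → ℝ} {p q M t T : ℝ}

lemma dualWeight_pos {y : ℝ} (hy : 0 < f y) : 0 < dualWeight p f y := Real.rpow_pos_of_pos hy _

lemma antitoneOn_dualWeight {s : Set ℝ} (hp : 1 ≤ p) (hf : MonotoneOn f s)
    (hpos : ∀ x ∈ s, 0 < f x) : AntitoneOn (dualWeight p f) s := fun x hx _ hy hxy =>
  Real.rpow_le_rpow_of_nonpos (hpos x hx) (hf hx hy hxy)
    (neg_nonpos.2 (one_div_nonneg.2 (sub_nonneg.2 hp)))

lemma dualWeight_eq_rpow (hq : q ≠ 1) {y : ℝ} (hy : 0 ≤ f y) :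
    dualWeight p f y = dualWeight q f y ^ ((q - 1) / (p - 1)) := by
  have hq1 : q - 1 ≠ 0 := sub_ne_zero.2 hq
  rw [dualWeight, dualWeight, ← Real.rpow_mul hy]
  congr 1
  field_simp

lemma integrableOn_dualWeight (hp : 1 ≤ p) (hf : MonotoneOn f (Ico 0 T))
    (hpos : ∀ x ∈ Ico 0 T, 0 < f x) :
    IntegrableOn (dualWeight p f) (Ioo 0 T) := by
  have hanti := antitoneOn_dualWeight hp hf hpos
  rw [← neg_neg (dualWeight p f)]
  refine (integrableOn_Ioo_of_monotoneOn_of_abs_le (C := dualWeight p f 0)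
    (hanti.mono Ioo_subset_Ico_self).neg fun x hx => ?_).neg
  change |(-dualWeight p f x)| ≤ _
  rw [abs_neg, abs_of_pos (dualWeight_pos (hpos x ⟨hx.1.le, hx.2⟩))]
  exact hanti ⟨le_rfl, hx.1.trans hx.2⟩ ⟨hx.1.le, hx.2⟩ hx.1.le

lemma muckenhouptRatio_eq_div (ht : 0 < t) (hH : 0 ≤ ∫ y in (0 : ℝ)..t, dualWeight q f y) :
    muckenhouptRatio q f t =
      (∫ y in (0 : ℝ)..t, f y) * (∫ y in (0 : ℝ)..t, dualWeight q f y) ^ (q - 1) / t ^ q := by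
  rw [muckenhouptRatio, Real.mul_rpow (by positivity) hH, Real.div_rpow zero_le_one ht.le,
    Real.one_rpow, Real.rpow_sub_one ht.ne']
  field_simp

lemma integral_mul_integral_dual_rpow_le (ht : 0 < t)
    (hH : 0 ≤ ∫ y in (0 : ℝ)..t, dualWeight q f y) (h : muckenhouptRatio q f t ≤ M) :
    (∫ y in (0 : ℝ)..t, f y) * (∫ y in (0 : ℝ)..t, dualWeight q f y) ^ (q - 1) ≤ M * t ^ q := by
  rwa [muckenhouptRatio_eq_div ht hH, div_le_iff₀ (Real.rpow_pos_of_pos ht q)] at h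

lemma log_muckenhouptRatio (ht : 0 < t) (hΦ : 0 < ∫ y in (0 : ℝ)..t, f y)
    (hH : 0 < ∫ y in (0 : ℝ)..t, dualWeight q f y) :
    Real.log (muckenhouptRatio q f t) = Real.log (∫ y in (0 : ℝ)..t, f y) +
      (q - 1) * Real.log (∫ y in (0 : ℝ)..t, dualWeight q f y) - q * Real.log t := by
  rw [muckenhouptRatio_eq_div ht hH.le, Real.log_div (by positivity) (by positivity),
    Real.log_mul hΦ.ne' (by positivity), Real.log_rpow hH, Real.log_rpow ht]

lemma one_le_muckenhouptRatio (hq : 1 < q) (ht : 0 < t) (hpos : ∀ x ∈ Ioo 0 t, 0 < f x)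
    (hfi : IntervalIntegrable f volume 0 t)
    (hgi : IntervalIntegrable (dualWeight q f) volume 0 t) : 1 ≤ muckenhouptRatio q f t := by
  have hΦ := intervalIntegral.intervalIntegral_pos_of_pos_on hfi hpos ht
  have hH := intervalIntegral.intervalIntegral_pos_of_pos_on hgi
    (fun y hy => dualWeight_pos (hpos y hy)) ht
  set A := (1 / t) * ∫ y in (0 : ℝ)..t, f y with hA
  set B := (1 / t) * ∫ y in (0 : ℝ)..t, dualWeight q f y with hB
  have hA0 : 0 < A := by positivity
  have hB0 : 0 < B := by positivity
  change 1 ≤ A * B ^ (q - 1)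
  have hpt : ∀ y ∈ Ioo 0 t, q * (A * B ^ (q - 1)) ^ (-(1 / q)) ≤
      A⁻¹ * f y + (q - 1) * B⁻¹ * dualWeight q f y :=
    fun y hy => mul_rpow_neg_le_inv_mul_add hq hA0 hB0 (hpos y hy)
  have hint : t * (q * (A * B ^ (q - 1)) ^ (-(1 / q))) ≤ t * q := by
    have hmono := intervalIntegral.integral_mono_on_of_le_Ioo ht.le intervalIntegrable_const
      ((hfi.const_mul A⁻¹).add (hgi.const_mul ((q - 1) * B⁻¹))) hpt
    rw [intervalIntegral.integral_const, intervalIntegral.integral_add (hfi.const_mul _)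
      (hgi.const_mul _), intervalIntegral.integral_const_mul,
      intervalIntegral.integral_const_mul, smul_eq_mul, sub_zero] at hmono
    refine hmono.trans_eq ?_
    rw [hA, hB]
    field_simp
    ring
  have hle : (A * B ^ (q - 1)) ^ (-(1 / q)) ≤ 1 := by
    have := le_of_mul_le_mul_left hint ht
    exact le_of_mul_le_mul_left (by linarith) (zero_lt_one.trans hq)
  by_contra! hlt
  exact hle.not_gt (Real.one_lt_rpow_of_pos_of_lt_one_of_neg (by positivity) hlt
    (neg_neg_of_pos (by positivity)))

lemma integral_le_of_muckenhouptRatio_le {s : ℝ} (hq : 1 ≤ q) (hs : 0 < s) (hst : s ≤ t)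
    (hpos : ∀ x ∈ Ioc 0 t, 0 < f x) (hgi : IntervalIntegrable (dualWeight q f) volume 0 t)
    (hA : muckenhouptRatio q f t ≤ M) :
    ∫ y in (0 : ℝ)..t, f y ≤ M * t ^ q / (∫ y in (0 : ℝ)..s, dualWeight q f y) ^ (q - 1) := by
  have ht : 0 < t := hs.trans_le hst
  have hdual : ∀ x ∈ Ioc 0 t, 0 < dualWeight q f x := fun x hx => dualWeight_pos (hpos x hx)
  have hdual_s : 0 < ∫ y in (0 : ℝ)..s, dualWeight q f y :=
    intervalIntegral.intervalIntegral_pos_of_pos_on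
      (hgi.mono_set (uIcc_subset_uIcc_left (Icc_subset_uIcc ⟨hs.le, hst⟩)))
      (fun y hy => hdual y ⟨hy.1, hy.2.le.trans hst⟩) hs
  have hdual_mono : ∫ y in (0 : ℝ)..s, dualWeight q f y ≤ ∫ y in (0 : ℝ)..t, dualWeight q f y :=
    intervalIntegral.integral_mono_interval le_rfl hs.le hst
      (ae_restrict_of_forall_mem measurableSet_Ioc fun y hy => (hdual y hy).le) hgi
  have hf_nonneg : 0 ≤ ∫ y in (0 : ℝ)..t, f y := by
    rw [intervalIntegral.integral_of_le ht.le]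
    exact setIntegral_nonneg measurableSet_Ioc fun y hy => (hpos y hy).le
  rw [le_div_iff₀ (by positivity)]
  calc (∫ y in (0 : ℝ)..t, f y) * (∫ y in (0 : ℝ)..s, dualWeight q f y) ^ (q - 1)
    _ ≤ (∫ y in (0 : ℝ)..t, f y) * (∫ y in (0 : ℝ)..t, dualWeight q f y) ^ (q - 1) := by
        gcongr
    _ ≤ M * t ^ q := integral_mul_integral_dual_rpow_le ht (hdual_s.le.trans hdual_mono) hA

lemma integrableOn_of_muckenhouptRatio_le (hq : 1 ≤ q) (hT : 0 < T) (hf : MonotoneOn f (Ioo 0 T))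
    (hpos : ∀ x ∈ Ioo 0 T, 0 < f x) (hgi : IntervalIntegrable (dualWeight q f) volume 0 T)
    (hA : ∀ t ∈ Ioo 0 T, muckenhouptRatio q f t ≤ M) : IntegrableOn f (Ioo 0 T) := by
  obtain ⟨u, -, hu, hu_tendsto⟩ := exists_seq_strictMono_tendsto' (half_lt_self hT)
  have hu0 : ∀ n, 0 < u n := fun n => (half_pos hT).trans (hu n).1
  have hu_pos : ∀ n, ∀ x ∈ Ioc 0 (u n), 0 < f x := fun n x hx =>
    hpos x ⟨hx.1, hx.2.trans_lt (hu n).2⟩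
  have hfi : ∀ n, IntegrableOn f (Ioc 0 (u n)) := fun n => by
    rw [integrableOn_Ioc_iff_integrableOn_Ioo]
    exact integrableOn_Ioo_of_monotoneOn_of_nonneg hf (fun x hx => (hpos x hx).le)
      ⟨hu0 n, (hu n).2⟩
  have hdual_half : 0 ≤ ∫ y in (0 : ℝ)..T / 2, dualWeight q f y := by
    rw [intervalIntegral.integral_of_le (half_pos hT).le]
    exact setIntegral_nonneg measurableSet_Ioc fun y hy =>
      (dualWeight_pos (hpos y ⟨hy.1, hy.2.trans_lt (half_lt_self hT)⟩)).le
  have hbound : ∀ n, ∫ y in Ioc 0 (u n), ‖f y‖ ≤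
      |M| * T ^ q / (∫ y in (0 : ℝ)..T / 2, dualWeight q f y) ^ (q - 1) := fun n => by
    have hu_pow : M * u n ^ q ≤ |M| * T ^ q := by
      have := hu0 n
      exact mul_le_mul (le_abs_self M) (Real.rpow_le_rpow this.le (hu n).2.le (by linarith))
        (by positivity) (abs_nonneg M)
    calc ∫ y in Ioc 0 (u n), ‖f y‖
      _ = ∫ y in (0 : ℝ)..u n, f y := by
          rw [intervalIntegral.integral_of_le (hu0 n).le]
          exact setIntegral_congr_fun measurableSet_Ioc fun y hy =>
            Real.norm_of_nonneg (hu_pos n y hy).le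
      _ ≤ M * u n ^ q / (∫ y in (0 : ℝ)..T / 2, dualWeight q f y) ^ (q - 1) :=
          integral_le_of_muckenhouptRatio_le hq (half_pos hT) (hu n).1.le (hu_pos n)
            (hgi.mono_set (uIcc_subset_uIcc_left (Icc_subset_uIcc ⟨(hu0 n).le, (hu n).2.le⟩)))
            (hA (u n) ⟨hu0 n, (hu n).2⟩)
      _ ≤ |M| * T ^ q / (∫ y in (0 : ℝ)..T / 2, dualWeight q f y) ^ (q - 1) := by
          gcongr
  rw [← integrableOn_Ioc_iff_integrableOn_Ioo]
  exact integrableOn_Ioc_of_intervalIntegral_norm_bounded_right hfi hu_tendsto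
    (Eventually.of_forall hbound)

end MuckenhouptRatio

/-- A non-decreasing weight `f` on `(0, T)` satisfying the `A_q` condition with constant `M` on
every `(0, t)`, `0 < t ≤ T`. Integrability of `f` and of its dual weight is part of the notion, so
that no mean in the `A_q` condition takes the junk value `0` of a divergent integral. -/
structure IsMonotoneMuckenhouptWeight (q M T : ℝ) (f : ℝ → ℝ) : Prop where
  monotoneOn : MonotoneOn f (Ioo 0 T)
  pos : ∀ x ∈ Ioo 0 T, 0 < f x
  integrable : IntervalIntegrable f volume 0 T
  integrable_dual : IntervalIntegrable (dualWeight q f) volume 0 T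
  ratio_le : ∀ t ∈ Ioc 0 T, muckenhouptRatio q f t ≤ M

namespace IsMonotoneMuckenhouptWeight

variable {f : ℝ → ℝ} {q M m μ p t T K e : ℝ}

lemma restrict (hf : IsMonotoneMuckenhouptWeight q M T f) (ht : t ∈ Ioc 0 T) :
    IsMonotoneMuckenhouptWeight q M t f :=
  have hsub : uIcc 0 t ⊆ uIcc 0 T := uIcc_subset_uIcc_left (Icc_subset_uIcc ⟨ht.1.le, ht.2⟩)
  { monotoneOn := hf.monotoneOn.mono (Ioo_subset_Ioo_right ht.2)
    pos := fun x hx => hf.pos x ⟨hx.1, hx.2.trans_le ht.2⟩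
    integrable := hf.integrable.mono_set hsub
    integrable_dual := hf.integrable_dual.mono_set hsub
    ratio_le := fun x hx => hf.ratio_le x ⟨hx.1, hx.2.trans ht.2⟩ }

lemma integral_pos (hf : IsMonotoneMuckenhouptWeight q M T f) (ht : t ∈ Ioc 0 T) :
    0 < ∫ y in (0 : ℝ)..t, f y :=
  intervalIntegral.intervalIntegral_pos_of_pos_on (hf.restrict ht).integrable
    (hf.restrict ht).pos ht.1

lemma integral_dual_pos (hf : IsMonotoneMuckenhouptWeight q M T f) (ht : t ∈ Ioc 0 T) :
    0 < ∫ y in (0 : ℝ)..t, dualWeight q f y :=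
  intervalIntegral.intervalIntegral_pos_of_pos_on (hf.restrict ht).integrable_dual
    (fun y hy => dualWeight_pos ((hf.restrict ht).pos y hy)) ht.1

lemma lyapunov_monotoneOn (hf : IsMonotoneMuckenhouptWeight q M T f) (hq : 1 < q) (hm : 0 ≤ m)
    (hμ : 0 ≤ μ) (hMm : M * m ^ q = μ ^ (q - 1)) :
    MonotoneOn (fun x => Real.log (∫ y in (0 : ℝ)..x, f y) +
      (q - 1) * μ * Real.log (∫ y in (0 : ℝ)..x, dualWeight q f y) - q * m * Real.log x)
      (Ioc 0 T) := by
  intro t ht T' hT' htT'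
  have hsub : Icc t T' ⊆ Ioc 0 T := fun x hx => ⟨ht.1.trans_le hx.1, hx.2.trans hT'.2⟩
  have hsub' : Icc t T' ⊆ uIcc 0 T := fun x hx => Icc_subset_uIcc ⟨(hsub hx).1.le, (hsub hx).2⟩
  have hIco : ∀ x ∈ Ico t T', x ∈ Ioo 0 T := fun x hx =>
    ⟨ht.1.trans_le hx.1, hx.2.trans_le hT'.2⟩
  have hlim : ∀ x ∈ Ioo 0 T, ∃ c, 0 < c ∧ Tendsto f (𝓝[>] x) (𝓝 c) := fun x hx =>
    exists_pos_tendsto_nhdsGT_of_monotoneOn hf.monotoneOn hf.pos hx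
  choose! c hc_pos hc using hlim
  have hΦ_cont := (intervalIntegral.continuousOn_primitive_interval' hf.integrable
    left_mem_uIcc).mono hsub'
  have hH_cont := (intervalIntegral.continuousOn_primitive_interval' hf.integrable_dual
    left_mem_uIcc).mono hsub'
  have hcont := ((hΦ_cont.log fun x hx => (hf.integral_pos (hsub hx)).ne').add
    ((hH_cont.log fun x hx => (hf.integral_dual_pos (hsub hx)).ne').const_mul ((q - 1) * μ))).sub
      ((continuousOn_id.log fun x hx => (hsub hx).1.ne').const_mul (q * m))
  have hderiv : ∀ x ∈ Ico t T', HasDerivWithinAt _ (c x / (∫ y in (0 : ℝ)..x, f y) +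
      (q - 1) * μ * (c x ^ (-(1 / (q - 1))) / ∫ y in (0 : ℝ)..x, dualWeight q f y) -
        q * m * (1 / x)) (Ici x) x := fun x hx => by
    have hxT := hIco x hx
    have hΦ' := hasDerivWithinAt_integral_Ici_of_tendsto_nhdsGT hf.integrable
      (Ioo_subset_Ico_self hxT) (hc x hxT)
    have hH' := hasDerivWithinAt_integral_Ici_of_tendsto_nhdsGT hf.integrable_dual
      (Ioo_subset_Ico_self hxT) ((hc x hxT).rpow_const (Or.inl (hc_pos x hxT).ne'))
    exact ((hΦ'.log (hf.integral_pos (Ioo_subset_Ioc_self hxT)).ne').add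
      ((hH'.log (hf.integral_dual_pos (Ioo_subset_Ioc_self hxT)).ne').const_mul _)).sub
      (((hasDerivWithinAt_id x _).log hxT.1.ne').const_mul _)
  refine monotoneOn_of_hasDerivWithinAt_Ici_nonneg hcont hderiv (fun x hx => ?_)
    (left_mem_Icc.2 htT') (right_mem_Icc.2 htT') htT'
  have hxT : x ∈ Ioc 0 T := Ioo_subset_Ioc_self (hIco x hx)
  exact lyapunov_deriv_nonneg hq hm hμ hMm hxT.1 (hc_pos x (hIco x hx)) (hf.integral_pos hxT)
    (hf.integral_dual_pos hxT) (integral_mul_integral_dual_rpow_le hxT.1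
      (hf.integral_dual_pos hxT).le (hf.ratio_le x hxT))

lemma integral_dual_le (hf : IsMonotoneMuckenhouptWeight q M T f) (hq : 1 < q) (hM : 0 < M)
    (hm : 0 ≤ m) (hμ : 1 < μ) (hMm : M * m ^ q = μ ^ (q - 1)) (ht : t ∈ Ioc 0 T) :
    ∫ y in (0 : ℝ)..t, dualWeight q f y ≤
      M ^ (1 / ((q - 1) * (μ - 1))) * (t / T) ^ (q * (m - 1) / ((q - 1) * (μ - 1))) *
        ∫ y in (0 : ℝ)..T, dualWeight q f y := by
  have ht0 : 0 < t := ht.1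
  have hT : T ∈ Ioc 0 T := ⟨ht.1.trans_le ht.2, le_rfl⟩
  have hT0 : 0 < T := hT.1
  have hHt := hf.integral_dual_pos ht
  have hHT := hf.integral_dual_pos hT
  have hft := hf.restrict ht
  have hκ : 0 < (q - 1) * (μ - 1) := mul_pos (by linarith) (by linarith)
  have hlyap := hf.lyapunov_monotoneOn hq hm (by linarith) hMm ht hT ht.2
  have hJensen : 0 ≤ Real.log (muckenhouptRatio q f t) :=
    Real.log_nonneg (one_le_muckenhouptRatio hq ht0 hft.pos hft.integrable hft.integrable_dual)
  have hAq : Real.log (muckenhouptRatio q f T) ≤ Real.log M :=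
    Real.log_le_log (zero_lt_one.trans_le (one_le_muckenhouptRatio hq hT0 hf.pos hf.integrable
      hf.integrable_dual)) (hf.ratio_le T hT)
  rw [log_muckenhouptRatio ht0 (hf.integral_pos ht) hHt] at hJensen
  rw [log_muckenhouptRatio hT0 (hf.integral_pos hT) hHT] at hAq
  dsimp only at hlyap
  rw [← Real.log_le_log_iff hHt (by positivity), Real.log_mul (by positivity) hHT.ne',
    Real.log_mul (by positivity) (by positivity), Real.log_rpow hM, Real.log_rpow (by positivity),
    Real.log_div ht0.ne' hT0.ne']
  refine le_of_mul_le_mul_left ?_ hκ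
  have hdistrib : ∀ a b c : ℝ, (q - 1) * (μ - 1) * (1 / ((q - 1) * (μ - 1)) * a +
      q * (m - 1) / ((q - 1) * (μ - 1)) * b + c) = a + q * (m - 1) * b + (q - 1) * (μ - 1) * c := by
    intro a b c
    rw [mul_add, mul_add, ← mul_assoc, ← mul_assoc, mul_one_div_cancel hκ.ne',
      mul_div_cancel₀ _ hκ.ne', one_mul]
  rw [hdistrib]
  linarith

lemma integrable_dual_and_mean_dual_le (hf : IsMonotoneMuckenhouptWeight q M T f) (hT : 0 < T)
    (hp : 1 ≤ p) (hq : 1 < q) (hK : 0 ≤ K) (he : (q - 1) / (p - 1) * (1 - e) < 1)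
    (hgrowth : ∀ t ∈ Ioo 0 T, ∫ y in (0 : ℝ)..t, dualWeight q f y ≤
      K * (t / T) ^ e * ∫ y in (0 : ℝ)..T, dualWeight q f y) :
    IntervalIntegrable (dualWeight p f) volume 0 T ∧
      (1 / T) * ∫ y in (0 : ℝ)..T, dualWeight p f y ≤
        K ^ ((q - 1) / (p - 1)) / (1 - (q - 1) / (p - 1) * (1 - e)) *
          ((1 / T) * ∫ y in (0 : ℝ)..T, dualWeight q f y) ^ ((q - 1) / (p - 1)) := by
  have hpow : EqOn (dualWeight p f) (fun y => dualWeight q f y ^ ((q - 1) / (p - 1))) (Ioo 0 T) :=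
    fun y hy => dualWeight_eq_rpow hq.ne' (hf.pos y hy).le
  have hreverse := reverse_holder_of_antitoneOn_of_integral_le hT
    (antitoneOn_dualWeight hq.le hf.monotoneOn hf.pos)
    (fun x hx => (dualWeight_pos (hf.pos x hx)).le) hf.integrable_dual
    hK (div_nonneg (by linarith) (by linarith)) he hgrowth
  rw [intervalIntegrable_iff_integrableOn_Ioo_of_le hT.le] at hreverse ⊢
  rw [integrableOn_congr_fun hpow measurableSet_Ioo]
  refine ⟨hreverse.1, le_trans (le_of_eq ?_) hreverse.2⟩
  simp only [intervalIntegral.integral_of_le hT.le, integral_Ioc_eq_integral_Ioo]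
  rw [setIntegral_congr_fun measurableSet_Ioo hpow]

lemma muckenhouptRatio_le_of_mean_dual_le {C : ℝ} (hf : IsMonotoneMuckenhouptWeight q M T f)
    (hT : 0 < T) (hp : 1 < p) (hC : 0 ≤ C)
    (h : (1 / T) * ∫ y in (0 : ℝ)..T, dualWeight p f y ≤
      C * ((1 / T) * ∫ y in (0 : ℝ)..T, dualWeight q f y) ^ ((q - 1) / (p - 1))) :
    muckenhouptRatio p f T ≤ C ^ (p - 1) * M := by
  have hp1 : 0 < p - 1 := by linarith
  have hT' : T ∈ Ioc 0 T := ⟨hT, le_rfl⟩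
  have hΦ := hf.integral_pos hT'
  have hH := hf.integral_dual_pos hT'
  have hG : 0 ≤ ∫ y in (0 : ℝ)..T, dualWeight p f y := by
    rw [intervalIntegral.integral_of_le hT.le, integral_Ioc_eq_integral_Ioo]
    exact setIntegral_nonneg measurableSet_Ioo fun y hy => (dualWeight_pos (hf.pos y hy)).le
  calc muckenhouptRatio p f T
      ≤ ((1 / T) * ∫ y in (0 : ℝ)..T, f y) *
          (C * ((1 / T) * ∫ y in (0 : ℝ)..T, dualWeight q f y) ^ ((q - 1) / (p - 1))) ^ (p - 1) :=
        mul_le_mul_of_nonneg_left (Real.rpow_le_rpow (by positivity) h hp1.le) (by positivity)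
    _ = C ^ (p - 1) * muckenhouptRatio q f T := by
        rw [muckenhouptRatio, Real.mul_rpow hC (by positivity), ← Real.rpow_mul (by positivity),
          div_mul_cancel₀ _ hp1.ne']
        ring
    _ ≤ C ^ (p - 1) * M := by
        gcongr
        exact hf.ratio_le T hT'

end IsMonotoneMuckenhouptWeight

theorem exists_muckenhouptRatio_le_of_mul_mul_div_rpow_lt_one {q M p : ℝ} (hM : 0 < M) (hp : 1 < p)
    (hpq : p < q) (h : M * p * ((q - p) / (q - 1)) ^ (q - 1) < 1) :
    ∃ M' : ℝ, 0 < M' ∧ ∀ (f : ℝ → ℝ) (T : ℝ), 0 < T → IsMonotoneMuckenhouptWeight q M T f →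
      IntervalIntegrable (dualWeight p f) volume 0 T ∧ muckenhouptRatio p f T ≤ M' := by
  have hq : 1 < q := hp.trans hpq
  obtain ⟨μ, m, hμ, hm, hMm, he⟩ := exists_lyapunov_exponents hM hp hpq h
  set e := q * (m - 1) / ((q - 1) * (μ - 1))
  set K := M ^ (1 / ((q - 1) * (μ - 1)))
  set C := K ^ ((q - 1) / (p - 1)) / (1 - (q - 1) / (p - 1) * (1 - e))
  have hC : 0 < C := div_pos (by positivity) (by linarith)
  refine ⟨C ^ (p - 1) * M, by positivity, fun f T hT hf => ?_⟩
  obtain ⟨hint, hmean⟩ := hf.integrable_dual_and_mean_dual_le hT hp.le hq (by positivity) he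
    fun t ht => hf.integral_dual_le hq hM hm.le hμ hMm ⟨ht.1, ht.2.le⟩
  exact ⟨hint, hf.muckenhouptRatio_le_of_mean_dual_le hT hp hC.le hmean⟩

theorem muckenhoupt_Ap_from_Aq_on_initial_intervals_general {q M p₀ p : ℝ} (hM : 0 < M)
    (hp₀ : 1 ≤ p₀) (hp₀eq : ((q - p₀) / (q - 1)) * (M * p₀) ^ (1 / (q - 1)) = 1)
    (hp : p ∈ Ioc p₀ q) :
    ∃ M' : ℝ, 0 < M' ∧ ∀ (f : ℝ → ℝ) (T : ℝ), 0 < T →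
      MonotoneOn f (Ioo 0 T) → (∀ x ∈ Ioo 0 T, 0 < f x) →
      IntegrableOn (dualWeight q f) (Ioo 0 T) →
      (∀ t ∈ Ioc 0 T, muckenhouptRatio q f t ≤ M) →
      (∀ t ∈ Ioc 0 T, muckenhouptRatio p f t ≤ M') ∧ IntegrableOn (dualWeight p f) (Ioo 0 T) := by
  rcases hp.2.eq_or_lt with rfl | hpq
  · exact ⟨M, hM, fun f T _ _ _ hdual hA => ⟨hA, hdual⟩⟩
  obtain ⟨M', hM', hbound⟩ := exists_muckenhouptRatio_le_of_mul_mul_div_rpow_lt_one hM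
    (hp₀.trans_lt hp.1) hpq (mul_mul_div_rpow_lt_one hM hp₀ hp₀eq hp.1 hpq)
  refine ⟨M', hM', fun f T hT hmono hpos hdual hA => ?_⟩
  rw [← intervalIntegrable_iff_integrableOn_Ioo_of_le hT.le] at hdual ⊢
  have hfi : IntervalIntegrable f volume 0 T :=
    (intervalIntegrable_iff_integrableOn_Ioo_of_le hT.le).2 <|
      integrableOn_of_muckenhouptRatio_le (by linarith [hp.1]) hT hmono hpos hdual
        fun t ht => hA t ⟨ht.1, ht.2.le⟩
  have hf : IsMonotoneMuckenhouptWeight q M T f := ⟨hmono, hpos, hfi, hdual, hA⟩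
  exact ⟨fun t ht => (hbound f t ht.1 (hf.restrict ht)).2, (hbound f T hT hf).1⟩

/-- **Theorem 3.** Let `q > 1`, `M ≥ 1`, and let `p₀ ∈ [1,q]` be the root of
`((q−p₀)/(q−1))(M p₀)^{1/(q-1)} = 1`. For every `p ∈ (p₀, q]` there is a constant
`M' = M'(p,q,M) > 0` such that every non-decreasing `f : [0,1) → (0,∞)` satisfying the
`A_q` condition with constant `M` on all intervals `(0,t)`, `t ∈ (0,1]`, satisfies the
`A_p` condition with constant `M'` on all such intervals; in particular `f^{-1/(p-1)}`
is integrable on `(0,1)`. -/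
theorem muckenhoupt_Ap_from_Aq_on_initial_intervals (q M p₀ p : ℝ)
    (hq : 1 < q) (hM : 1 ≤ M) (hp₀mem : p₀ ∈ Set.Icc 1 q)
    (hp₀eq : ((q - p₀) / (q - 1)) * (M * p₀) ^ (1 / (q - 1)) = 1)
    (hp : p ∈ Set.Ioc p₀ q) :
    ∃ M' : ℝ, 0 < M' ∧ ∀ f : ℝ → ℝ, Measurable f →
      MonotoneOn f (Set.Ico 0 1) →
      (∀ x ∈ Set.Ico (0 : ℝ) 1, 0 < f x) →
      (∀ t ∈ Set.Ioc (0 : ℝ) 1,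
        ((1 / t) * ∫ y in (0 : ℝ)..t, f y) *
          ((1 / t) * ∫ y in (0 : ℝ)..t, f y ^ (-(1 / (q - 1)))) ^ (q - 1) ≤ M) →
      (∀ t ∈ Set.Ioc (0 : ℝ) 1,
        ((1 / t) * ∫ y in (0 : ℝ)..t, f y) *
          ((1 / t) * ∫ y in (0 : ℝ)..t, f y ^ (-(1 / (p - 1)))) ^ (p - 1) ≤ M') ∧
      IntegrableOn (fun y => f y ^ (-(1 / (p - 1)))) (Set.Ioo 0 1) := by
  obtain ⟨M', hM', h⟩ := muckenhoupt_Ap_from_Aq_on_initial_intervals_general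
    (zero_lt_one.trans_le hM) hp₀mem.1 hp₀eq hp
  exact ⟨M', hM', fun f _ hf hpos => h f 1 zero_lt_one (hf.mono Ioo_subset_Ico_self)
    (fun x hx => hpos x (Ioo_subset_Ico_self hx)) (integrableOn_dualWeight hq.le hf hpos)⟩
end
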